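/- arXiv:2406.05890 — 2 statements merged into one kernel-verified Lean document; each statement's English description precedes it below -/
import Mathlib

section
/- Let p ≥ 3 be a prime and let (a_n)_{n≥0} be given by a_n = c_1·λ_1^n + c_2·λ_2^n with a_n ∈ ℚ_p for all n, where c_1, c_2, λ_1, λ_2 are nonzero elements of ℚ_p or of the unramified quadratic extension ℚ_p(√d). Assume |λ_1|_p = |λ_2|_p > 0 and that λ_2/λ_1 is not a root of unity. Let l be the order of λ_2/λ_1 modulo p and k = ν_p((λ_2/λ_1)^l − 1). If −c_1/c_2 does not belong to the closure of {(λ_2/λ_1)^n : n ∈ ℕ}, then the Kepler set of (a_n) is the disjoint union K((a_n)) = ⨆_{i=0}^{l−1} ( a_{i+1}/a_i + p^{m_i}·ℤ_p ), where m_i = ν_p(c_1/c_2) + ν_p(λ_2 − λ_1) − 2·ν_p(c_1/c_2 + (λ_2/λ_1)^i) + k, and the l balls are pairwise disjoint. -/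
/-- The Kepler set of a sequence `a` in `ℚ_[p]`: the closure of the set of
consecutive ratios `a (n+1) / a n` over indices `n` with `a n ≠ 0`. -/
def keplerSet (p : ℕ) [Fact p.Prime] (a : ℕ → ℚ_[p]) : Set ℚ_[p] :=
  closure {x : ℚ_[p] | ∃ n : ℕ, a n ≠ 0 ∧ x = a (n + 1) / a n}

/-!
Write `μ = lam₂ / lam₁` and `c = c₁ / c₂`. The ratio `a (n + 1) / a n` is a Möbius transform of
`μ ^ n`, so the distance between two ratios is a constant times `‖μ ^ m - μ ^ n‖`, divided by
`‖c + μ ^ m‖ * ‖c + μ ^ n‖`. By lifting the exponent, `j ↦ μ ^ (i + l * j)` is a similarity of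
ratio `‖μ ^ l - 1‖` for the `p`-adic metric on `ℕ`. If `‖μ ^ l - 1‖ < ‖c + μ ^ i‖`, the
denominators are constant along the class of `i` modulo `l`, so the ratios of this class also form a
similar copy of `ℕ`; being in `ℚ_[p]`, their closure is a similar copy of `ℤ_[p]`, which can only be
a ball.

The inequality `‖μ ^ l - 1‖ < ‖c + μ ^ i‖` is what the assumption on `-c` provides. Otherwise
another Möbius transform of `μ ^ n`, again with values in `ℚ_[p]`, is a similarity along the class
of `i` and takes `-c` to a point of the ball filled by its values; so powers of `μ` approach `-c`.
-/

section Ultrametric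

variable {K : Type*} [NormedField K]

theorem lt_norm_pow_sub_pow {z : K} (hz : ‖z‖ = 1) {l : ℕ} {r : ℝ}
    (hr : ∀ m, 0 < m → m < l → r < ‖z ^ m - 1‖) {i j : ℕ} (hi : i < l) (hj : j < l)
    (hij : i ≠ j) : r < ‖z ^ i - z ^ j‖ := by
  wlog hji : j < i generalizing i j
  · rw [norm_sub_rev]
    exact this hj hi hij.symm (by lia)
  obtain ⟨q, rfl⟩ := Nat.exists_eq_add_of_lt hji
  have hfactor : z ^ (j + q + 1) - z ^ j = z ^ j * (z ^ (q + 1) - 1) := by ring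
  rw [hfactor, norm_mul, norm_pow, hz, one_pow, one_mul]
  exact hr _ (by lia) (by lia)

variable [IsUltrametricDist K]

theorem norm_eq_of_norm_sub_lt_right {x y : K} (h : ‖x - y‖ < ‖y‖) : ‖x‖ = ‖y‖ := by
  rw [← norm_neg y]
  exact IsUltrametricDist.norm_eq_of_add_norm_lt_max
    (by rw [← sub_eq_add_neg, norm_neg]; exact h.trans_le (le_max_right _ _))

theorem norm_eq_one_of_norm_sub_one_lt_one {z : K} (hz : ‖z - 1‖ < 1) : ‖z‖ = 1 := by
  simpa using norm_eq_of_norm_sub_lt_right (y := (1 : K)) (by simpa using hz)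

theorem norm_pow_sub_one_le {z : K} (hz : ‖z‖ ≤ 1) (n : ℕ) : ‖z ^ n - 1‖ ≤ ‖z - 1‖ := by
  rw [← geom_sum_mul, norm_mul]
  refine mul_le_of_le_one_left (norm_nonneg _) ?_
  refine IsUltrametricDist.norm_sum_le_of_forall_le_of_nonneg zero_le_one fun i _ => ?_
  simpa using pow_le_one₀ (norm_nonneg z) hz

theorem norm_pow_sub_one_of_norm_natCast_eq_one {z : K} {n : ℕ} (hn : ‖(n : K)‖ = 1)
    (hz : ‖z - 1‖ < 1) : ‖z ^ n - 1‖ = ‖z - 1‖ := by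
  have hz1 : ‖z‖ ≤ 1 := (norm_eq_one_of_norm_sub_one_lt_one hz).le
  have hsum : ∑ i ∈ Finset.range n, z ^ i - n = ∑ i ∈ Finset.range n, (z ^ i - 1) := by
    simp [Finset.sum_sub_distrib]
  have hgeom : ‖∑ i ∈ Finset.range n, z ^ i‖ = ‖(n : K)‖ := by
    apply norm_eq_of_norm_sub_lt_right
    rw [hsum, hn]
    exact (IsUltrametricDist.norm_sum_le_of_forall_le_of_nonneg (norm_nonneg _) fun i _ =>
      norm_pow_sub_one_le hz1 i).trans_lt hz
  rw [← geom_sum_mul, norm_mul, hgeom, hn, one_mul]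

theorem mul_norm_lt_norm_sub_mul_norm {x y : K} {r : ℝ} (hr : 0 ≤ r) (hx : r < ‖x‖)
    (hxy : r < ‖x - y‖) : r * ‖y‖ < ‖x - y‖ * ‖x‖ := by
  rcases le_or_gt ‖y‖ ‖x‖ with hle | hlt
  · calc r * ‖y‖ ≤ r * ‖x‖ := by gcongr
      _ < ‖x - y‖ * ‖x‖ := by gcongr; exact hr.trans_lt hx
  · have hnorm : ‖x - y‖ = ‖y‖ := by
      rw [← norm_neg y]
      exact norm_eq_of_norm_sub_lt_right (by simpa using hlt)
    rw [hnorm, mul_comm]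
    have := (norm_nonneg x).trans_lt hlt
    gcongr

end Ultrametric

section LiftingTheExponent

variable {p : ℕ} [Fact p.Prime] {K : Type*} [NormedField K] [NormedAlgebra ℚ_[p] K]

theorem norm_natCast_eq_padic_norm (n : ℕ) : ‖(n : K)‖ = ‖(n : ℚ_[p])‖ := by
  rw [← norm_algebraMap' K (n : ℚ_[p]), map_natCast]

theorem lt_one_of_pow_lt_inv_prime {x : ℝ} (hx : x ^ (p - 1) < (p : ℝ)⁻¹) : x < 1 := by
  have hp := (Fact.out : p.Prime).one_lt
  by_contra! h
  exact ((one_le_pow₀ h).trans_lt hx).not_ge (inv_le_one_of_one_le₀ (by exact_mod_cast hp.le))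

theorem lt_norm_two_of_pow_lt_inv_prime {x : ℝ} (hx : x ^ (p - 1) < (p : ℝ)⁻¹) :
    x < ‖(2 : K)‖ := by
  have htwo : ‖(2 : K)‖ = ‖((2 : ℕ) : ℚ_[p])‖ := by
    exact_mod_cast norm_natCast_eq_padic_norm (K := K) (p := p) 2
  obtain rfl | hp2 := eq_or_ne p 2
  · simpa [htwo, -Nat.cast_ofNat] using hx
  · rw [htwo, Padic.norm_natCast_eq_one_iff.2 ((Nat.coprime_primes Fact.out Nat.prime_two).2 hp2)]
    exact lt_one_of_pow_lt_inv_prime hx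

variable [IsUltrametricDist K]

theorem norm_choose_mul_pow_lt {w : K} (hw0 : w ≠ 0) (hw : ‖w‖ ^ (p - 1) < (p : ℝ)⁻¹) {k : ℕ}
    (hk : k ∈ Finset.Ico 2 (p + 1)) : ‖w ^ k * (p.choose k : K)‖ < (p : ℝ)⁻¹ * ‖w‖ := by
  have hp : p.Prime := Fact.out
  have hw_pos : 0 < ‖w‖ := norm_pos_iff.2 hw0
  obtain ⟨hk2, hkp⟩ := Finset.mem_Ico.1 hk
  rw [norm_mul, norm_pow]
  obtain rfl | hkp' := eq_or_ne k p
  · rw [Nat.choose_self, Nat.cast_one, norm_one, mul_one, ← pow_sub_one_mul hp.ne_zero]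
    gcongr
  · obtain ⟨m, hm⟩ := hp.dvd_choose_self (by lia) (by lia : k < p)
    have hchoose : ‖(p.choose k : K)‖ ≤ (p : ℝ)⁻¹ := by
      rw [hm, Nat.cast_mul, norm_mul, norm_natCast_eq_padic_norm (p := p) p, Padic.norm_p]
      exact mul_le_of_le_one_right (by positivity) (IsUltrametricDist.norm_natCast_le_one K m)
    have hpow : ‖w‖ ^ k < ‖w‖ :=
      pow_lt_self_of_lt_one₀ hw_pos (lt_one_of_pow_lt_inv_prime hw) (by lia)
    calc ‖w‖ ^ k * ‖(p.choose k : K)‖ ≤ ‖w‖ ^ k * (p : ℝ)⁻¹ := by gcongr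
      _ < ‖w‖ * (p : ℝ)⁻¹ := by
        have := hp.pos
        gcongr
      _ = (p : ℝ)⁻¹ * ‖w‖ := mul_comm _ _

theorem norm_pow_prime_sub_one {z : K} (hz : ‖z - 1‖ ^ (p - 1) < (p : ℝ)⁻¹) :
    ‖z ^ p - 1‖ = (p : ℝ)⁻¹ * ‖z - 1‖ := by
  have hp2 := (Fact.out : p.Prime).two_le
  obtain rfl | hz1 := eq_or_ne z 1
  · simp
  have hlead : ‖(p : K) * (z - 1)‖ = (p : ℝ)⁻¹ * ‖z - 1‖ := by
    rw [norm_mul, norm_natCast_eq_padic_norm (p := p) p, Padic.norm_p]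
  have hbinom : z ^ p - 1 - p * (z - 1) =
      ∑ k ∈ Finset.Ico 2 (p + 1), (z - 1) ^ k * (p.choose k : K) := by
    have h := add_pow (z - 1) 1 p
    rw [Finset.range_eq_Ico, Finset.sum_eq_sum_Ico_succ_bot (by lia),
      Finset.sum_eq_sum_Ico_succ_bot (by lia)] at h
    simp only [sub_add_cancel, one_pow, mul_one, pow_zero, Nat.choose_zero_right, Nat.cast_one,
      zero_add, pow_one, Nat.choose_one_right, Nat.reduceAdd] at h
    rw [h]
    ring
  rw [← hlead]
  apply norm_eq_of_norm_sub_lt_right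
  obtain ⟨k, hk, hle⟩ := IsUltrametricDist.exists_norm_finsetSum_le_of_nonempty
    (Finset.nonempty_Ico.2 (by lia : 2 < p + 1))
    fun k => (z - 1) ^ k * (p.choose k : K)
  rw [hbinom, hlead]
  exact hle.trans_lt (norm_choose_mul_pow_lt (sub_ne_zero.2 hz1) hz hk)

/-- The assumption on `z` describes the largest disc about `1` on which the `p`-adic logarithm is an
isometry; for odd `p` it contains the disc `‖z - 1‖ ≤ p⁻¹`. -/
theorem norm_pow_sub_one (n : ℕ) {z : K} (hz : ‖z - 1‖ ^ (p - 1) < (p : ℝ)⁻¹) :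
    ‖z ^ n - 1‖ = ‖z - 1‖ * ‖(n : ℚ_[p])‖ := by
  induction n using Nat.recOnMul generalizing z with
  | zero => simp
  | one => simp
  | prime q hq =>
    obtain rfl | hqp := eq_or_ne q p
    · rw [norm_pow_prime_sub_one hz, Padic.norm_p, mul_comm]
    · have hq1 : ‖(q : ℚ_[p])‖ = 1 :=
        Padic.norm_natCast_eq_one_iff.2 ((Nat.coprime_primes Fact.out hq).2 hqp.symm)
      rw [norm_pow_sub_one_of_norm_natCast_eq_one ((norm_natCast_eq_padic_norm q).trans hq1)
        (lt_one_of_pow_lt_inv_prime hz), hq1, mul_one]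
  | mul m n ihm ihn =>
    have hz1 : ‖z‖ = 1 := norm_eq_one_of_norm_sub_one_lt_one (lt_one_of_pow_lt_inv_prime hz)
    have hzm : ‖z ^ m - 1‖ ^ (p - 1) < (p : ℝ)⁻¹ :=
      (pow_le_pow_left₀ (norm_nonneg _) (norm_pow_sub_one_le hz1.le m) _).trans_lt hz
    rw [pow_mul, ihn hzm, ihm hz, Nat.cast_mul, norm_mul, mul_assoc]

theorem norm_pow_add_mul_sub_pow_add_mul {μ : K} (hμ : ‖μ‖ = 1) {l : ℕ}
    (hl : ‖μ ^ l - 1‖ ^ (p - 1) < (p : ℝ)⁻¹) (i j j' : ℕ) :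
    ‖μ ^ (i + l * j) - μ ^ (i + l * j')‖ = ‖μ ^ l - 1‖ * ‖(j : ℚ_[p]) - j'‖ := by
  wlog hjj : j' ≤ j generalizing j j'
  · rw [norm_sub_rev, this j' j (by lia), norm_sub_rev (j : ℚ_[p])]
  obtain ⟨q, rfl⟩ := Nat.exists_eq_add_of_le hjj
  have hfactor : μ ^ (i + l * (j' + q)) - μ ^ (i + l * j') =
      μ ^ (i + l * j') * ((μ ^ l) ^ q - 1) := by ring
  rw [hfactor, norm_mul, norm_pow, hμ, one_pow, one_mul, norm_pow_sub_one q hl]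
  simp

end LiftingTheExponent

section PadicSimilarity

variable {p : ℕ} [Fact p.Prime]

theorem denseRange_of_norm_sub_eq {g : ℕ → ℤ_[p]}
    (hg : ∀ i j : ℕ, ‖g i - g j‖ = ‖(i : ℤ_[p]) - j‖) : DenseRange g := by
  have hp1 : (1 : ℝ) < p := by exact_mod_cast (Fact.out : p.Prime).one_lt
  have hmod : ∀ (N : ℕ) (x y : ℤ_[p]), PadicInt.toZModPow N x = PadicInt.toZModPow N y ↔
      ‖x - y‖ ≤ (p : ℝ) ^ (-N : ℤ) := fun N x y => by
    rw [PadicInt.norm_le_pow_iff_mem_span_pow, ← PadicInt.ker_toZModPow, RingHom.mem_ker,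
      map_sub, sub_eq_zero]
  refine Metric.denseRange_iff.2 fun y ε hε => ?_
  obtain ⟨N, hN⟩ := exists_pow_lt_of_lt_one hε (inv_lt_one_of_one_lt₀ hp1)
  have : NeZero (p ^ N) := ⟨pow_ne_zero _ (Fact.out : p.Prime).ne_zero⟩
  have hinj : Function.Injective fun j : ZMod (p ^ N) => PadicInt.toZModPow N (g j.val) := by
    intro i j hij
    have h := (hmod N _ _).1 hij
    rw [hg, ← hmod] at h
    simpa using h
  obtain ⟨j, hj⟩ := Finite.injective_iff_surjective.1 hinj (PadicInt.toZModPow N y)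
  refine ⟨j.val, lt_of_le_of_lt ?_ hN⟩
  rw [dist_eq_norm, inv_pow, ← zpow_natCast, ← zpow_neg]
  exact (hmod N _ _).1 hj.symm

theorem range_add_mul_coe_padicInt (b u : ℚ_[p]) :
    Set.range (fun y : ℤ_[p] => b + u * y) = Metric.closedBall b ‖u‖ := by
  ext x
  rw [Set.mem_range, mem_closedBall_iff_norm]
  constructor
  · rintro ⟨y, rfl⟩
    rw [add_sub_cancel_left, norm_mul]
    exact mul_le_of_le_one_right (norm_nonneg _) y.norm_le_one
  · intro hx
    obtain rfl | hu := eq_or_ne u 0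
    · exact ⟨0, by simpa [sub_eq_zero, eq_comm] using hx⟩
    · refine ⟨⟨(x - b) / u, ?_⟩, ?_⟩
      · rw [norm_div]
        exact div_le_one_of_le₀ hx (norm_nonneg _)
      · rw [mul_div_cancel₀ _ hu, add_sub_cancel]

theorem closure_range_eq_closedBall {f : ℕ → ℚ_[p]} {r : ℝ}
    (hf : ∀ i j : ℕ, ‖f i - f j‖ = r * ‖(i : ℚ_[p]) - j‖) :
    closure (Set.range f) = Metric.closedBall (f 0) r := by
  have hr : r = ‖f 1 - f 0‖ := by simp [hf]
  have hle : ∀ j, ‖f j - f 0‖ ≤ r := fun j => by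
    rw [hf, Nat.cast_zero, sub_zero]
    exact mul_le_of_le_one_right (hr ▸ norm_nonneg _)
      (IsUltrametricDist.norm_natCast_le_one ℚ_[p] j)
  set u := f 1 - f 0
  set F : ℤ_[p] → ℚ_[p] := fun y => f 0 + u * y
  have hrange : Set.range F = Metric.closedBall (f 0) r := by
    rw [hr, range_add_mul_coe_padicInt]
  have hF : Continuous F := by fun_prop
  obtain rfl | hr0 := eq_or_ne r 0
  · have hconst : ∀ j, f j = f 0 := fun j => sub_eq_zero.1 (norm_le_zero_iff.1 (hle j))
    rw [funext hconst, Set.range_const, closure_singleton, Metric.closedBall_zero]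
  choose g hg using fun j => hrange.ge (mem_closedBall_iff_norm.2 (hle j))
  have hg_isom : ∀ i j, ‖g i - g j‖ = ‖(i : ℤ_[p]) - j‖ := fun i j => by
    have h := hf i j
    rw [← hg i, ← hg j] at h
    simp only [F, add_sub_add_left_eq_sub, ← mul_sub, norm_mul, ← hr] at h
    simpa [PadicInt.norm_def] using mul_left_cancel₀ hr0 h
  calc closure (Set.range f) = closure (F '' Set.range g) := by
        rw [← Set.range_comp, ← funext hg, Function.comp_def]
    _ = F '' closure (Set.range g) := hF.isClosedMap.closure_image_eq_of_continuous hF _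
    _ = Metric.closedBall (f 0) r := by
        rw [(denseRange_of_norm_sub_eq hg_isom).closure_range, Set.image_univ, hrange]

end PadicSimilarity

section BinaryExponentialSum

variable {F K : Type*} [Field F] [Field K] [Algebra F K] {b c θ μ : K} {a : ℕ → F}

theorem algebraMap_casoratian (ha : ∀ n, algebraMap F K (a n) = b * θ ^ n * (c + μ ^ n))
    (m n : ℕ) : algebraMap F K (a (m + 1) * a n - a (n + 1) * a m) =
      b ^ 2 * c * (θ * (μ - 1)) * θ ^ (m + n) * (μ ^ m - μ ^ n) := by
  simp only [map_sub, map_mul, ha]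
  ring

theorem exists_algebraMap_eq_trace (hb : b ≠ 0) (hc : c ≠ 0) (hθ : θ ≠ 0) (hμ : μ ≠ 1)
    (ha : ∀ n, algebraMap F K (a n) = b * θ ^ n * (c + μ ^ n)) :
    ∃ t : F, algebraMap F K t = θ * (1 + μ) := by
  have hμ' : μ - 1 ≠ 0 := sub_ne_zero.2 hμ
  refine ⟨(a (2 + 1) * a 0 - a (0 + 1) * a 2) / (a (1 + 1) * a 0 - a (0 + 1) * a 1), ?_⟩
  rw [map_div₀, algebraMap_casoratian ha, algebraMap_casoratian ha]
  field_simp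
  ring

end BinaryExponentialSum

/-- The inverse of `2 * (a (n + 1) / a n) - t`. When `a n = c₁ * lam₁ ^ n + c₂ * lam₂ ^ n` and
`t = lam₁ + lam₂`, it is a Möbius transform of `(lam₂ / lam₁) ^ n`, with values in the field of `a`,
that vanishes exactly where `(lam₂ / lam₁) ^ n = -(c₁ / c₂)`. -/
def centeredQuotient {F : Type*} [Field F] (t : F) (a : ℕ → F) (n : ℕ) : F :=
  a n / (2 * a (n + 1) - t * a n)

section Norm

variable {F K : Type*} [NormedField F] [NormedField K] [NormedAlgebra F K] {b c θ μ : K}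
  {a : ℕ → F}

theorem norm_eq_mul_norm_add_pow (ha : ∀ n, algebraMap F K (a n) = b * θ ^ n * (c + μ ^ n))
    (n : ℕ) : ‖a n‖ = ‖b‖ * ‖θ‖ ^ n * ‖c + μ ^ n‖ := by
  rw [← norm_algebraMap' K, ha, norm_mul, norm_mul, norm_pow]

theorem norm_casoratian (ha : ∀ n, algebraMap F K (a n) = b * θ ^ n * (c + μ ^ n)) (m n : ℕ) :
    ‖a (m + 1) * a n - a (n + 1) * a m‖ =
      ‖b‖ ^ 2 * ‖c‖ * ‖θ * (μ - 1)‖ * ‖θ‖ ^ (m + n) * ‖μ ^ m - μ ^ n‖ := by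
  rw [← norm_algebraMap' K, algebraMap_casoratian ha]
  simp only [norm_mul, norm_pow]

theorem norm_ratio_sub_ratio (ha : ∀ n, algebraMap F K (a n) = b * θ ^ n * (c + μ ^ n)) {m n : ℕ}
    (hm : a m ≠ 0) (hn : a n ≠ 0) : ‖a (m + 1) / a m - a (n + 1) / a n‖ =
      ‖c‖ * ‖θ * (μ - 1)‖ * ‖μ ^ m - μ ^ n‖ / (‖c + μ ^ m‖ * ‖c + μ ^ n‖) := by
  have hscale : ∀ {n}, a n ≠ 0 → ‖b‖ * ‖θ‖ ^ n ≠ 0 := fun {n} hn => by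
    rw [← norm_ne_zero_iff, norm_eq_mul_norm_add_pow ha] at hn
    exact left_ne_zero_of_mul hn
  rw [div_sub_div _ _ hm hn, mul_comm (a m), norm_div, norm_casoratian ha, norm_mul (a m),
    norm_eq_mul_norm_add_pow ha, norm_eq_mul_norm_add_pow ha,
    ← mul_div_mul_left _ (‖c + μ ^ m‖ * _) (mul_ne_zero (hscale hm) (hscale hn))]
  ring

section CenteredQuotient

variable [IsUltrametricDist K] {t : F}

theorem norm_centeredQuotient_denom (hμ : ‖μ‖ = 1)
    (ha : ∀ n, algebraMap F K (a n) = b * θ ^ n * (c + μ ^ n))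
    (ht : algebraMap F K t = θ * (1 + μ)) {n : ℕ} (hn : ‖c + μ ^ n‖ < ‖(2 : K)‖) :
    ‖2 * a (n + 1) - t * a n‖ = ‖b‖ * ‖θ‖ ^ n * ‖2 * (θ * (μ - 1))‖ := by
  have hdenom : algebraMap F K (2 * a (n + 1) - t * a n) =
      b * θ ^ n * (θ * (μ - 1)) * (μ ^ n - c) := by
    simp only [map_sub, map_mul, map_ofNat, ht, ha]
    ring
  have htwo : ‖2 * μ ^ n‖ = ‖(2 : K)‖ := by rw [norm_mul, norm_pow, hμ, one_pow, mul_one]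
  have hdiff : ‖μ ^ n - c‖ = ‖(2 : K)‖ := by
    rw [← htwo]
    apply norm_eq_of_norm_sub_lt_right
    rwa [htwo, ← norm_neg, show -(μ ^ n - c - 2 * μ ^ n) = c + μ ^ n by ring]
  rw [← norm_algebraMap' K, hdenom]
  simp only [norm_mul, norm_pow, hdiff]
  ring

theorem norm_centeredQuotient (hb : b ≠ 0) (hθ : θ ≠ 0) (hμ : ‖μ‖ = 1)
    (ha : ∀ n, algebraMap F K (a n) = b * θ ^ n * (c + μ ^ n))
    (ht : algebraMap F K t = θ * (1 + μ)) {n : ℕ} (hn : ‖c + μ ^ n‖ < ‖(2 : K)‖) :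
    ‖centeredQuotient t a n‖ = ‖c + μ ^ n‖ / ‖2 * (θ * (μ - 1))‖ := by
  rw [centeredQuotient, norm_div, norm_centeredQuotient_denom hμ ha ht hn,
    norm_eq_mul_norm_add_pow ha, mul_div_mul_left]
  exact mul_ne_zero (norm_ne_zero_iff.2 hb) (pow_ne_zero _ (norm_ne_zero_iff.2 hθ))

theorem norm_centeredQuotient_sub (hb : b ≠ 0) (hθ : θ ≠ 0) (hμ : ‖μ‖ = 1) (hμ1 : μ ≠ 1)
    (ha : ∀ n, algebraMap F K (a n) = b * θ ^ n * (c + μ ^ n))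
    (ht : algebraMap F K t = θ * (1 + μ)) {m n : ℕ} (hm : ‖c + μ ^ m‖ < ‖(2 : K)‖)
    (hn : ‖c + μ ^ n‖ < ‖(2 : K)‖) :
    ‖centeredQuotient t a m - centeredQuotient t a n‖ =
      ‖μ ^ m - μ ^ n‖ / ‖2 * (θ * (μ - 1))‖ := by
  have htwo : ‖(2 : K)‖ ≠ 0 := ((norm_nonneg _).trans_lt hm).ne'
  have hδ : θ * (μ - 1) ≠ 0 := mul_ne_zero hθ (sub_ne_zero.2 hμ1)
  have hb' := norm_ne_zero_iff.2 hb
  have hδ' := norm_ne_zero_iff.2 hδ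
  have hD : ∀ {n}, ‖c + μ ^ n‖ < ‖(2 : K)‖ → 2 * a (n + 1) - t * a n ≠ 0 := fun hn => by
    rw [← norm_ne_zero_iff, norm_centeredQuotient_denom hμ ha ht hn, norm_mul]
    positivity
  have hc : ‖c‖ = 1 := by
    have hpow : ‖-μ ^ m‖ = 1 := by rw [norm_neg, norm_pow, hμ, one_pow]
    rw [← hpow]
    apply norm_eq_of_norm_sub_lt_right
    rw [hpow, sub_neg_eq_add]
    exact hm.trans_le (by exact_mod_cast IsUltrametricDist.norm_natCast_le_one K 2)
  have hnum : a m * (2 * a (n + 1) - t * a n) - (2 * a (m + 1) - t * a m) * a n =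
      2 * (a (n + 1) * a m - a (m + 1) * a n) := by ring
  have htwo_base : ‖(2 : F)‖ = ‖(2 : K)‖ := by rw [← norm_algebraMap' K, map_ofNat]
  rw [centeredQuotient, centeredQuotient, div_sub_div _ _ (hD hm) (hD hn), hnum, norm_div,
    norm_mul, norm_mul, norm_casoratian ha, norm_centeredQuotient_denom hμ ha ht hm,
    norm_centeredQuotient_denom hμ ha ht hn, norm_sub_rev (μ ^ n), hc, htwo_base,
    norm_mul (2 : K), pow_add]
  field_simp

end CenteredQuotient

end Norm

section KeplerSet

variable {p : ℕ} [Fact p.Prime]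

theorem keplerSet_eq_biUnion_closure_range {a : ℕ → ℚ_[p]} (ha : ∀ n, a n ≠ 0) {l : ℕ}
    (hl : 0 < l) : keplerSet p a = ⋃ i ∈ Finset.range l,
      closure (Set.range fun j => a (i + l * j + 1) / a (i + l * j)) := by
  rw [keplerSet, ← Finset.closure_biUnion]
  congr 1
  ext x
  simp only [Set.mem_ofPred_eq, Set.mem_iUnion, Set.mem_range, Finset.mem_range, exists_prop]
  constructor
  · rintro ⟨n, -, rfl⟩
    exact ⟨n % l, Nat.mod_lt _ hl, n / l, by rw [Nat.mod_add_div]⟩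
  · rintro ⟨i, -, j, rfl⟩
    exact ⟨i + l * j, ha _, rfl⟩

variable {K : Type*} [NormedField K] [NormedAlgebra ℚ_[p] K] [IsUltrametricDist K]
  {b c θ μ : K} {l : ℕ}

theorem norm_add_pow_add_mul_sub_le (hμ : ‖μ‖ = 1) (hl : ‖μ ^ l - 1‖ ^ (p - 1) < (p : ℝ)⁻¹)
    (i j : ℕ) : ‖(c + μ ^ (i + l * j)) - (c + μ ^ i)‖ ≤ ‖μ ^ l - 1‖ := by
  have h := norm_pow_add_mul_sub_pow_add_mul hμ hl i j 0
  rw [mul_zero, add_zero, Nat.cast_zero, sub_zero] at h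
  rw [add_sub_add_left_eq_sub, h]
  exact mul_le_of_le_one_right (norm_nonneg _) (IsUltrametricDist.norm_natCast_le_one ℚ_[p] j)

theorem norm_add_pow_add_mul (hμ : ‖μ‖ = 1) (hl : ‖μ ^ l - 1‖ ^ (p - 1) < (p : ℝ)⁻¹) {i : ℕ}
    (hi : ‖μ ^ l - 1‖ < ‖c + μ ^ i‖) (j : ℕ) : ‖c + μ ^ (i + l * j)‖ = ‖c + μ ^ i‖ :=
  norm_eq_of_norm_sub_lt_right ((norm_add_pow_add_mul_sub_le hμ hl i j).trans_lt hi)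

variable {a : ℕ → ℚ_[p]}

/-- The centered quotients along `i + l * ℕ` fill a ball of `ℚ_[p]` containing `0`; hence one of
them is close to `0`, and its index gives a power of `μ` close to `-c`. -/
theorem neg_mem_closure_range_pow (hb : b ≠ 0) (hc : c ≠ 0) (hθ : θ ≠ 0) (hμ : ‖μ‖ = 1)
    (ha : ∀ n, algebraMap ℚ_[p] K (a n) = b * θ ^ n * (c + μ ^ n))
    (hl : ‖μ ^ l - 1‖ ^ (p - 1) < (p : ℝ)⁻¹) {i : ℕ} (hi : ‖c + μ ^ i‖ ≤ ‖μ ^ l - 1‖) :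
    -c ∈ closure (Set.range fun n : ℕ => μ ^ n) := by
  obtain rfl | hμ1 := eq_or_ne μ 1
  · refine subset_closure ⟨0, ?_⟩
    simpa [eq_neg_iff_add_eq_zero, add_comm] using hi
  obtain ⟨t, ht⟩ := exists_algebraMap_eq_trace hb hc hθ hμ1 ha
  have hsmall : ∀ j, ‖c + μ ^ (i + l * j)‖ < ‖(2 : K)‖ := fun j => by
    refine lt_of_le_of_lt ?_ (lt_norm_two_of_pow_lt_inv_prime hl)
    rw [← sub_add_cancel (c + μ ^ (i + l * j)) (c + μ ^ i)]
    exact (IsUltrametricDist.norm_add_le_max _ _).trans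
      (max_le (norm_add_pow_add_mul_sub_le hμ hl i j) hi)
  have hnorm := fun j => norm_centeredQuotient hb hθ hμ ha ht (hsmall j)
  set κ := ‖2 * (θ * (μ - 1))‖
  have hκ : 0 < κ := norm_pos_iff.2 <| mul_ne_zero
    (norm_pos_iff.1 ((norm_nonneg _).trans_lt (hsmall 0))) (mul_ne_zero hθ (sub_ne_zero.2 hμ1))
  have hball : closure (Set.range fun j => centeredQuotient t a (i + l * j)) =
      Metric.closedBall (centeredQuotient t a (i + l * 0)) (‖μ ^ l - 1‖ / κ) :=
    closure_range_eq_closedBall fun j j' => by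
      rw [norm_centeredQuotient_sub hb hθ hμ hμ1 ha ht (hsmall j) (hsmall j'),
        norm_pow_add_mul_sub_pow_add_mul hμ hl, mul_div_right_comm]
  have hzero : (0 : ℚ_[p]) ∈ closure (Set.range fun j => centeredQuotient t a (i + l * j)) := by
    rw [hball, mem_closedBall_iff_norm, zero_sub, norm_neg, hnorm]
    gcongr
    simpa using hi
  refine Metric.mem_closure_range_iff.2 fun ε hε => ?_
  obtain ⟨j, hj⟩ := Metric.mem_closure_range_iff.1 hzero (ε / κ) (div_pos hε hκ)
  rw [dist_zero_left, hnorm, div_lt_div_iff_of_pos_right hκ] at hj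
  exact ⟨i + l * j, by rwa [dist_eq_norm, ← neg_add', norm_neg]⟩

theorem closure_range_ratio_eq_closedBall (hμ : ‖μ‖ = 1)
    (ha : ∀ n, algebraMap ℚ_[p] K (a n) = b * θ ^ n * (c + μ ^ n)) (ha0 : ∀ n, a n ≠ 0)
    (hl : ‖μ ^ l - 1‖ ^ (p - 1) < (p : ℝ)⁻¹) {i : ℕ} (hi : ‖μ ^ l - 1‖ < ‖c + μ ^ i‖) :
    closure (Set.range fun j => a (i + l * j + 1) / a (i + l * j)) =
      Metric.closedBall (a (i + 1) / a i)
        (‖c‖ * ‖θ * (μ - 1)‖ * ‖μ ^ l - 1‖ / ‖c + μ ^ i‖ ^ 2) := by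
  refine closure_range_eq_closedBall fun j j' => ?_
  rw [norm_ratio_sub_ratio ha (ha0 _) (ha0 _), norm_add_pow_add_mul hμ hl hi,
    norm_add_pow_add_mul hμ hl hi, norm_pow_add_mul_sub_pow_add_mul hμ hl]
  ring

theorem disjoint_closedBall_ratio (hc : c ≠ 0) (hθ : θ ≠ 0)
    (ha : ∀ n, algebraMap ℚ_[p] K (a n) = b * θ ^ n * (c + μ ^ n)) (ha0 : ∀ n, a n ≠ 0) {r : ℝ}
    (hr : 0 ≤ r) {m n : ℕ} (hm : r < ‖c + μ ^ m‖) (hn : r < ‖c + μ ^ n‖)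
    (hmn : r < ‖μ ^ m - μ ^ n‖) :
    Disjoint
      (Metric.closedBall (a (m + 1) / a m) (‖c‖ * ‖θ * (μ - 1)‖ * r / ‖c + μ ^ m‖ ^ 2))
      (Metric.closedBall (a (n + 1) / a n) (‖c‖ * ‖θ * (μ - 1)‖ * r / ‖c + μ ^ n‖ ^ 2)) := by
  wlog hle : ‖c + μ ^ m‖ ≤ ‖c + μ ^ n‖ generalizing m n
  · exact (this hn hm (by rwa [norm_sub_rev]) (le_of_not_ge hle)).symm
  have hμ1 : μ ≠ 1 := by
    rintro rfl
    exact hr.not_gt (by simpa using hmn)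
  have hE : 0 < ‖c‖ * ‖θ * (μ - 1)‖ :=
    mul_pos (norm_pos_iff.2 hc) (norm_pos_iff.2 (mul_ne_zero hθ (sub_ne_zero.2 hμ1)))
  have hm0 := hr.trans_lt hm
  have hn0 := hr.trans_lt hn
  have hcross : r * ‖c + μ ^ n‖ < ‖μ ^ m - μ ^ n‖ * ‖c + μ ^ m‖ := by
    rw [← add_sub_add_left_eq_sub (μ ^ m) (μ ^ n) c] at hmn ⊢
    exact mul_norm_lt_norm_sub_mul_norm hr hm hmn
  have hcenters : ‖c‖ * ‖θ * (μ - 1)‖ * r / ‖c + μ ^ m‖ ^ 2 <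
      dist (a (m + 1) / a m) (a (n + 1) / a n) := by
    rw [dist_eq_norm, norm_ratio_sub_ratio ha (ha0 m) (ha0 n), mul_div_assoc, mul_div_assoc]
    refine mul_lt_mul_of_pos_left ?_ hE
    rw [div_lt_div_iff₀ (by positivity) (by positivity)]
    calc r * (‖c + μ ^ m‖ * ‖c + μ ^ n‖) = r * ‖c + μ ^ n‖ * ‖c + μ ^ m‖ := by ring
      _ < ‖μ ^ m - μ ^ n‖ * ‖c + μ ^ m‖ * ‖c + μ ^ m‖ := by gcongr
      _ = ‖μ ^ m - μ ^ n‖ * ‖c + μ ^ m‖ ^ 2 := by ring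
  have hradii : ‖c‖ * ‖θ * (μ - 1)‖ * r / ‖c + μ ^ n‖ ^ 2 ≤
      ‖c‖ * ‖θ * (μ - 1)‖ * r / ‖c + μ ^ m‖ ^ 2 := by gcongr
  refine Set.disjoint_left.2 fun x hxm hxn => hcenters.not_ge ?_
  refine (dist_triangle_max _ x _).trans (max_le ?_ ?_)
  · exact Metric.mem_closedBall'.1 hxm
  · exact (Metric.mem_closedBall.1 hxn).trans hradii

end KeplerSet

theorem stmt_1_general {p : ℕ} [Fact p.Prime] {K : Type*} [NormedField K]
    [NormedAlgebra ℚ_[p] K] [IsUltrametricDist K] {c₁ c₂ lam₁ lam₂ : K} (hc₁ : c₁ ≠ 0)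
    (hc₂ : c₂ ≠ 0) (hlam₁ : lam₁ ≠ 0) (hnorm : ‖lam₁‖ = ‖lam₂‖) {a : ℕ → ℚ_[p]}
    (ha : ∀ n, algebraMap ℚ_[p] K (a n) = c₁ * lam₁ ^ n + c₂ * lam₂ ^ n) {l : ℕ} (hl0 : 0 < l)
    (hl : ‖(lam₂ / lam₁) ^ l - 1‖ ^ (p - 1) < (p : ℝ)⁻¹)
    (hlmin : ∀ m, 0 < m → m < l → ‖(lam₂ / lam₁) ^ l - 1‖ < ‖(lam₂ / lam₁) ^ m - 1‖)
    (hcl : -(c₁ / c₂) ∉ closure (Set.range fun n : ℕ => (lam₂ / lam₁) ^ n)) :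
    (keplerSet p a = ⋃ i ∈ Finset.range l, Metric.closedBall (a (i + 1) / a i)
      (‖c₁ / c₂‖ * ‖lam₂ - lam₁‖ * ‖(lam₂ / lam₁) ^ l - 1‖ /
        ‖c₁ / c₂ + (lam₂ / lam₁) ^ i‖ ^ 2)) ∧
    (↑(Finset.range l) : Set ℕ).PairwiseDisjoint fun i => Metric.closedBall (a (i + 1) / a i)
      (‖c₁ / c₂‖ * ‖lam₂ - lam₁‖ * ‖(lam₂ / lam₁) ^ l - 1‖ /
        ‖c₁ / c₂ + (lam₂ / lam₁) ^ i‖ ^ 2) := by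
  set μ := lam₂ / lam₁ with hμ_def
  set c := c₁ / c₂ with hc_def
  have hμ : ‖μ‖ = 1 := by rw [norm_div, hnorm, div_self (hnorm ▸ norm_ne_zero_iff.2 hlam₁)]
  have hc : c ≠ 0 := div_ne_zero hc₁ hc₂
  have hΔ : lam₂ - lam₁ = lam₁ * (μ - 1) := by rw [hμ_def]; field_simp
  have ha' : ∀ n, algebraMap ℚ_[p] K (a n) = c₂ * lam₁ ^ n * (c + μ ^ n) := fun n => by
    rw [ha, hμ_def, hc_def, div_pow]
    field_simp
  have hfar : ∀ i, ‖μ ^ l - 1‖ < ‖c + μ ^ i‖ := fun i =>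
    not_le.1 fun h => hcl (neg_mem_closure_range_pow hc₂ hc hlam₁ hμ ha' hl h)
  have ha0 : ∀ n, a n ≠ 0 := fun n => by
    rw [← norm_ne_zero_iff, norm_eq_mul_norm_add_pow ha']
    have := (norm_nonneg _).trans_lt (hfar n)
    positivity
  rw [hΔ]
  constructor
  · rw [keplerSet_eq_biUnion_closure_range ha0 hl0]
    exact Set.iUnion₂_congr fun i _ =>
      closure_range_ratio_eq_closedBall hμ ha' ha0 hl (hfar i)
  · intro i hi j hj hij
    exact disjoint_closedBall_ratio hc hlam₁ ha' ha0 (norm_nonneg _) (hfar i) (hfar j)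
      (lt_norm_pow_sub_pow hμ hlmin (Finset.mem_range.1 hi) (Finset.mem_range.1 hj) hij)

theorem pow_sub_one_lt_inv {p : ℕ} (hp : 3 ≤ p) {x : ℝ} (hx0 : 0 ≤ x) (hx : x ≤ (p : ℝ)⁻¹) :
    x ^ (p - 1) < (p : ℝ)⁻¹ := by
  have hp1 : (1 : ℝ) < p := by exact_mod_cast (by lia : 1 < p)
  exact (pow_le_pow_left₀ hx0 hx _).trans_lt
    (pow_lt_self_of_lt_one₀ (by positivity) (inv_lt_one_of_one_lt₀ hp1) (by lia))

theorem zpow_neg_add_sub_two_mul_add {x : ℝ} (hx : x ≠ 0) (u v w k : ℤ) :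
    x ^ (-(u + v - 2 * w + k)) = x ^ (-u) * x ^ (-v) * x ^ (-k) / (x ^ (-w)) ^ 2 := by
  rw [← zpow_natCast, ← zpow_mul, ← zpow_add₀ hx, ← zpow_add₀ hx, ← zpow_sub₀ hx]
  congr 1
  push_cast
  ring

theorem stmt_1 (p : ℕ) [Fact p.Prime] (hp : 3 ≤ p)
    -- `K` is `ℚ_p` or the unramified quadratic extension `ℚ_p(√d)` of `ℚ_p`:
    -- a nonarchimedean normed field extension of `ℚ_p`, spanned by `1` and `√d`
    -- for a nonsquare unit `d`, with norms integer powers of `p` (unramifiedness)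
    (K : Type) [NormedField K] [Algebra ℚ_[p] K]
    (hiso : ∀ x : ℚ_[p], ‖algebraMap ℚ_[p] K x‖ = ‖x‖)
    (hna : ∀ x y : K, ‖x + y‖ ≤ max ‖x‖ ‖y‖)
    (hval : ∀ x : K, x ≠ 0 → ∃ m : ℤ, ‖x‖ = (p : ℝ) ^ (-m))
    (d : ℚ_[p]) (hd : ‖d‖ = 1) (hdns : ¬ ∃ y : ℚ_[p], y ^ 2 = d)
    (sq : K) (hsq : sq ^ 2 = algebraMap ℚ_[p] K d)
    (hspan : ∀ x : K, ∃ u v : ℚ_[p], x = algebraMap ℚ_[p] K u + algebraMap ℚ_[p] K v * sq)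
    -- the sequence `a n = c₁ lam₁ ^ n + c₂ lam₂ ^ n`, with values in `ℚ_p`
    (c₁ c₂ lam₁ lam₂ : K) (hc₁ : c₁ ≠ 0) (hc₂ : c₂ ≠ 0) (hlam₁ : lam₁ ≠ 0) (hlam₂ : lam₂ ≠ 0)
    (hnorm : ‖lam₁‖ = ‖lam₂‖) (hpos : 0 < ‖lam₂‖)
    (hru : ∀ n : ℕ, 0 < n → (lam₂ / lam₁) ^ n ≠ 1)
    (a : ℕ → ℚ_[p])
    (ha : ∀ n : ℕ, algebraMap ℚ_[p] K (a n) = c₁ * lam₁ ^ n + c₂ * lam₂ ^ n)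
    -- `l` is the order of `lam₂/lam₁` modulo `p`
    (l : ℕ) (hl0 : 0 < l) (hl : ‖(lam₂ / lam₁) ^ l - 1‖ ≤ (p : ℝ)⁻¹)
    (hlmin : ∀ m : ℕ, 0 < m → ‖(lam₂ / lam₁) ^ m - 1‖ ≤ (p : ℝ)⁻¹ → l ≤ m)
    -- `k = ν_p((lam₂/lam₁) ^ l - 1)`
    (k : ℕ) (hk : ‖(lam₂ / lam₁) ^ l - 1‖ = (p : ℝ) ^ (-(k : ℤ)))
    -- `-c₁/c₂` is not in the closure of `{(lam₂/lam₁) ^ n}`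
    (hcl : -(c₁ / c₂) ∉ closure {z : K | ∃ n : ℕ, z = (lam₂ / lam₁) ^ n})
    -- `vc = ν_p(c₁/c₂)`, `vΔ = ν_p(lam₂ - lam₁)`, `w i = ν_p(c₁/c₂ + (lam₂/lam₁) ^ i)`
    (vc vΔ : ℤ) (hvc : ‖c₁ / c₂‖ = (p : ℝ) ^ (-vc)) (hvΔ : ‖lam₂ - lam₁‖ = (p : ℝ) ^ (-vΔ))
    (w : ℕ → ℤ) (hw : ∀ i ∈ Finset.range l, ‖c₁ / c₂ + (lam₂ / lam₁) ^ i‖ = (p : ℝ) ^ (-(w i))) :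
    (keplerSet p a =
      ⋃ i ∈ Finset.range l,
        {x : ℚ_[p] | ‖x - a (i + 1) / a i‖ ≤ (p : ℝ) ^ (-(vc + vΔ - 2 * w i + (k : ℤ)))}) ∧
    (↑(Finset.range l) : Set ℕ).PairwiseDisjoint
      (fun i =>
        {x : ℚ_[p] | ‖x - a (i + 1) / a i‖ ≤ (p : ℝ) ^ (-(vc + vΔ - 2 * w i + (k : ℤ)))}) := by
  have : IsUltrametricDist K :=
    IsUltrametricDist.isUltrametricDist_of_forall_norm_add_le_max_norm hna
  let : NormedAlgebra ℚ_[p] K :=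
    { ‹Algebra ℚ_[p] K› with
      norm_smul_le := fun r x => by rw [Algebra.smul_def, norm_mul, hiso] }
  have hball : ∀ i ∈ Finset.range l,
      {x : ℚ_[p] | ‖x - a (i + 1) / a i‖ ≤ (p : ℝ) ^ (-(vc + vΔ - 2 * w i + (k : ℤ)))} =
        Metric.closedBall (a (i + 1) / a i) (‖c₁ / c₂‖ * ‖lam₂ - lam₁‖ *
          ‖(lam₂ / lam₁) ^ l - 1‖ / ‖c₁ / c₂ + (lam₂ / lam₁) ^ i‖ ^ 2) := fun i hi => by
    rw [zpow_neg_add_sub_two_mul_add (by positivity), ← hvc, ← hvΔ, ← hk, ← hw i hi]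
    ext x
    exact mem_closedBall_iff_norm.symm
  obtain ⟨hkepler, hdisj⟩ := stmt_1_general hc₁ hc₂ hlam₁ hnorm ha hl0
    (pow_sub_one_lt_inv hp (norm_nonneg _) hl)
    (fun m hm hml => hl.trans_lt (not_le.1 fun h => hml.not_ge (hlmin m hm h)))
    (by simpa only [Set.range, eq_comm] using hcl)
  exact ⟨hkepler.trans (Set.iUnion₂_congr fun i hi => (hball i hi).symm),
    hdisj.mono_on fun i hi => (hball i hi).le⟩
end

section
/- Let L(a,b) be a Lucas sequence of the first kind with characteristic roots λ_1, λ_2, and let p ≥ 3 be a prime. Suppose that ℚ_p(√D) is an unramified quadratic extension of ℚ_p (where D = a² + 4b), that the rank of appearance satisfies α_L(p) = p + 1, and that ν_p((λ_2/λ_1)^{α_L(p)} − 1) = 1. Then the Kepler set of (L_n) is the whole p-adic field: K((L_n)) = ℚ_p. -/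
/-- The Lucas sequence of the first kind `L(a,b)`:
`L 0 = 0`, `L 1 = 1`, `L n = a L (n-1) + b L (n-2)`. -/
def lucasSeq (a b : ℤ) : ℕ → ℤ
  | 0 => 0
  | 1 => 1
  | n + 2 => a * lucasSeq a b (n + 1) + b * lucasSeq a b n

/-!
Write `ω ^ n = L_n ω + b L_{n-1}` in `ℤ[ω] = ℤ[X]/(X² - aX - b)`. Taking `j`-th powers gives the
lifting-the-exponent formula `ν_p(L_{nj}) = ν_p(L_n) + ν_p(j)` whenever `p ∣ L_n`, `p` odd.
If `p + 1` is the rank of appearance and `p² ∤ L_{p+1}`, then `p ^ (k+1) ∣ L_m` forces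
`p ^ k (p + 1) ∣ m`. By d'Ocagne's identity `L_{n+1} L_{n+d} - L_{n+d+1} L_n = (-b) ^ n L_d`, the
ratios `L_{n+1} / L_n` with `0 < n ≤ p ^ k (p + 1)` and `(p + 1) ∤ n` are then pairwise incongruent
modulo `p ^ (k+1)`; there are exactly `p ^ (k+1)` of them, so they fill every residue class and are
dense in `ℤ_p`. The map `y ↦ b / (y - a)`, which sends each ratio to the preceding one, carries
`ℤ_p` onto a set containing the rest of `ℚ_p`. In `ℚ_p(√D)` the roots are units and
`√D` is integral, so Binet's formula turns `ν_p((λ₂/λ₁) ^ (p+1) - 1) = 1` into `p² ∤ L_{p+1}`.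
-/

lemma lucasSeq_dOcagne (a b : ℤ) (n d : ℕ) :
    lucasSeq a b (n + 1) * lucasSeq a b (n + d) - lucasSeq a b (n + d + 1) * lucasSeq a b n =
      (-b) ^ n * lucasSeq a b d := by
  induction n with
  | zero => simp [lucasSeq]
  | succ n ih =>
    rw [show n + 1 + d = n + d + 1 by ring, lucasSeq, lucasSeq]
    linear_combination (-b) * ih

lemma lucasSeq_mul_sub_roots {R : Type*} [CommRing R] {a b : ℤ} {x y : R}
    (hsum : x + y = a) (hprod : x * y = -b) :
    ∀ n : ℕ, (lucasSeq a b n : R) * (x - y) = x ^ n - y ^ n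
  | 0 => by simp [lucasSeq]
  | 1 => by simp [lucasSeq]
  | n + 2 => by
    have ih₀ := lucasSeq_mul_sub_roots hsum hprod n
    have ih₁ := lucasSeq_mul_sub_roots hsum hprod (n + 1)
    rw [lucasSeq, Int.cast_add, Int.cast_mul, Int.cast_mul, ← hsum, ← neg_neg (b : R), ← hprod]
    linear_combination (x + y) * ih₁ - x * y * ih₀

lemma lucasSeq_div_sub_eq_mul_div {F : Type*} [Field F] {a b : ℤ} {n : ℕ}
    (hn : (lucasSeq a b (n + 1) : F) ≠ 0) :
    (lucasSeq a b (n + 2) / lucasSeq a b (n + 1) - a : F) =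
      b * lucasSeq a b n / lucasSeq a b (n + 1) := by
  rw [lucasSeq, div_sub' hn]
  push_cast
  ring

lemma dvd_lucasSeq_succ_sub_pow {a b c : ℤ} (h : c ∣ b) (n : ℕ) :
    c ∣ lucasSeq a b (n + 1) - a ^ n := by
  induction n with
  | zero => simp [lucasSeq]
  | succ n ih =>
    have hrec : lucasSeq a b (n + 2) - a ^ (n + 1) =
        a * (lucasSeq a b (n + 1) - a ^ n) + b * lucasSeq a b n := by
      rw [lucasSeq]
      ring
    exact hrec ▸ dvd_add (ih.mul_left a) (h.mul_right _)

section QuadraticOrder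

open QuadraticAlgebra

variable {R : Type*} [CommRing R] {α β : R}

lemma algebraMap_re_add_im_smul_omega (z : QuadraticAlgebra R α β) :
    algebraMap R _ z.re + z.im • (ω : QuadraticAlgebra R α β) = z :=
  (mk_eq_add_smul_omega z.re z.im).symm

lemma exists_im_pow_eq (z : QuadraticAlgebra R α β) (j : ℕ) :
    ∃ t, (z ^ j).im = z.im * (j * z.re ^ (j - 1) + z.im * t) := by
  obtain ⟨w, hw⟩ :=
    sq_dvd_add_pow_sub_sub (z.im • (ω : QuadraticAlgebra R α β)) (algebraMap R _ z.re) j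
  rw [algebraMap_re_add_im_smul_omega, ← map_pow, ← map_pow, ← Algebra.smul_def, smul_pow,
    smul_mul_assoc] at hw
  refine ⟨(ω ^ 2 * w).im, ?_⟩
  have him := congrArg QuadraticAlgebra.im hw
  simp only [im_sub, im_mul, im_smul, re_smul, omega_im, omega_re, im_natCast, re_natCast,
    smul_eq_mul, algebraMap_im] at him ⊢
  linear_combination him

lemma exists_im_pow_eq_of_odd {p : ℕ} (hodd : Odd p) {z : QuadraticAlgebra R α β}
    (h : (p : R) ∣ z.im) : ∃ t, (z ^ p).im = z.im * p * (z.re ^ (p - 1) + p * t) := by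
  obtain ⟨c, hc⟩ := h
  have hz : algebraMap R _ z.re + (p : QuadraticAlgebra R α β) * (c • ω) = z := by
    ext <;> simp [hc, mul_comm]
  obtain ⟨w, hw⟩ := odd_sq_dvd_geom_sum₂_sub (algebraMap R _ z.re)
    (c • ω : QuadraticAlgebra R α β) hodd
  have hpow := (Commute.all z (algebraMap R _ z.re)).geom_sum₂_mul p
  rw [hz] at hw
  rw [sub_eq_iff_eq_add.1 hw, ← map_pow, ← map_pow, ← Nat.cast_pow] at hpow
  refine ⟨(w * ω).im, ?_⟩
  have him := congrArg QuadraticAlgebra.im hpow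
  simp only [im_sub, im_mul, re_mul, re_add, re_sub, im_add, omega_im, omega_re, im_natCast,
    re_natCast, algebraMap_im, algebraMap_re] at him ⊢
  push_cast at him
  linear_combination -him

section Int

variable {α β : ℤ} {p : ℕ} {z : QuadraticAlgebra ℤ α β}

lemma dvd_norm_iff_dvd_re {d : ℤ} (hd : Prime d) (hz : d ∣ z.im) : d ∣ z.norm ↔ d ∣ z.re := by
  rw [norm_def, add_sub_assoc, dvd_add_left (dvd_sub (hz.mul_left _) (hz.mul_left _)), hd.dvd_mul,
    or_self]

lemma emultiplicity_im_pow_of_not_dvd (hp : p.Prime) (him : (p : ℤ) ∣ z.im)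
    (hnorm : ¬ (p : ℤ) ∣ z.norm) {j : ℕ} (hj : ¬ p ∣ j) :
    emultiplicity (p : ℤ) (z ^ j).im = emultiplicity (p : ℤ) z.im := by
  have hpZ := Nat.prime_iff_prime_int.1 hp
  rw [dvd_norm_iff_dvd_re hpZ him] at hnorm
  obtain ⟨t, ht⟩ := exists_im_pow_eq z j
  have hcof : ¬ (p : ℤ) ∣ j * z.re ^ (j - 1) + z.im * t := by
    rw [dvd_add_left (him.mul_right _), hpZ.dvd_mul, Int.natCast_dvd_natCast]
    exact fun h => h.elim hj fun h => hnorm (hpZ.dvd_of_dvd_pow h)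
  rw [ht, emultiplicity_mul hpZ, emultiplicity_eq_zero.2 hcof, add_zero]

lemma emultiplicity_im_pow_self (hp : p.Prime) (hodd : Odd p) (him : (p : ℤ) ∣ z.im)
    (hnorm : ¬ (p : ℤ) ∣ z.norm) :
    emultiplicity (p : ℤ) (z ^ p).im = emultiplicity (p : ℤ) z.im + 1 := by
  have hpZ := Nat.prime_iff_prime_int.1 hp
  rw [dvd_norm_iff_dvd_re hpZ him] at hnorm
  obtain ⟨t, ht⟩ := exists_im_pow_eq_of_odd hodd him
  have hcof : ¬ (p : ℤ) ∣ z.re ^ (p - 1) + p * t := by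
    rw [dvd_add_left (dvd_mul_right _ _)]
    exact fun h => hnorm (hpZ.dvd_of_dvd_pow h)
  rw [ht, emultiplicity_mul hpZ, emultiplicity_mul hpZ, emultiplicity_eq_zero.2 hcof, add_zero,
    Int.natCast_emultiplicity, hp.emultiplicity_self]

lemma emultiplicity_im_pow (hp : p.Prime) (hodd : Odd p) (him : (p : ℤ) ∣ z.im)
    (hnorm : ¬ (p : ℤ) ∣ z.norm) (j : ℕ) :
    emultiplicity (p : ℤ) (z ^ j).im = emultiplicity (p : ℤ) z.im + emultiplicity p j := by
  induction j using induction_on_primes generalizing z with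
  | zero => simp
  | one => rw [pow_one, hp.emultiplicity_one, add_zero]
  | prime_mul q j hq ih =>
    have hq_im : (p : ℤ) ∣ (z ^ q).im := by
      obtain ⟨t, ht⟩ := exists_im_pow_eq z q
      exact ht ▸ him.mul_right _
    have hq_norm : ¬ (p : ℤ) ∣ (z ^ q).norm := by
      rw [map_pow]
      exact fun h => hnorm ((Nat.prime_iff_prime_int.1 hp).dvd_of_dvd_pow h)
    rw [pow_mul, ih hq_im hq_norm, hp.emultiplicity_mul, ← add_assoc]
    congr 1
    obtain rfl | hqp := eq_or_ne p q
    · rw [emultiplicity_im_pow_self hp hodd him hnorm, hp.emultiplicity_self]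
    · have hpq : ¬ p ∣ q := mt (Nat.prime_dvd_prime_iff_eq hp hq).1 hqp
      rw [emultiplicity_im_pow_of_not_dvd hp him hnorm hpq, emultiplicity_eq_zero.2 hpq, add_zero]

end Int

lemma omega_pow_im (a b : ℤ) : ∀ n : ℕ, (ω ^ n : QuadraticAlgebra ℤ b a).im = lucasSeq a b n
  | 0 => rfl
  | 1 => by simp [lucasSeq]
  | n + 2 => by
    rw [pow_succ', pow_succ', ← mul_assoc, omega_mul_omega_eq_add, add_mul, smul_one_mul,
      smul_mul_assoc, ← pow_succ', im_add, im_smul, im_smul, omega_pow_im, omega_pow_im, lucasSeq,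
      add_comm, smul_eq_mul, smul_eq_mul]

lemma omega_norm (a b : ℤ) : (ω : QuadraticAlgebra ℤ b a).norm = -b := by
  simp [norm_def]

lemma emultiplicity_lucasSeq_mul {p : ℕ} (hp : p.Prime) (hodd : Odd p) {a b : ℤ}
    (hb : ¬ (p : ℤ) ∣ b) {n : ℕ} (hn : (p : ℤ) ∣ lucasSeq a b n) (j : ℕ) :
    emultiplicity (p : ℤ) (lucasSeq a b (n * j)) =
      emultiplicity (p : ℤ) (lucasSeq a b n) + emultiplicity p j := by
  have hnorm : ¬ (p : ℤ) ∣ (ω ^ n : QuadraticAlgebra ℤ b a).norm := by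
    rw [map_pow, omega_norm]
    exact fun h => hb (dvd_neg.1 ((Nat.prime_iff_prime_int.1 hp).dvd_of_dvd_pow h))
  rw [← omega_pow_im] at hn
  rw [← omega_pow_im, ← omega_pow_im, pow_mul, emultiplicity_im_pow hp hodd hn hnorm]

end QuadraticOrder

/-- The rank of appearance of `p` in the Lucas sequence `L(a,b)`, the least positive index `n` with
`p ∣ L_n`. -/
def IsRankOfAppearance (p : ℕ) (a b : ℤ) (α : ℕ) : Prop :=
  IsLeast {n : ℕ | 0 < n ∧ (p : ℤ) ∣ lucasSeq a b n} α

lemma IsRankOfAppearance.dvd_of_dvd_lucasSeq {p : ℕ} (hp : p.Prime) {a b : ℤ}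
    (hb : ¬ (p : ℤ) ∣ b) {α : ℕ} (hα : IsRankOfAppearance p a b α) {m : ℕ}
    (hm : (p : ℤ) ∣ lucasSeq a b m) : α ∣ m := by
  induction m using Nat.strong_induction_on with
  | _ m ih =>
    obtain rfl | hm₀ := m.eq_zero_or_pos
    · exact dvd_zero α
    obtain ⟨d, rfl⟩ := Nat.exists_eq_add_of_le (hα.2 ⟨hm₀, hm⟩)
    have hpow : (p : ℤ) ∣ (-b) ^ α * lucasSeq a b d :=
      lucasSeq_dOcagne a b α d ▸ dvd_sub (hm.mul_left _) (hα.1.2.mul_left _)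
    have hd : (p : ℤ) ∣ lucasSeq a b d :=
      ((Nat.prime_iff_prime_int.1 hp).dvd_or_dvd hpow).resolve_left fun h =>
        hb (dvd_neg.1 ((Nat.prime_iff_prime_int.1 hp).dvd_of_dvd_pow h))
    exact (Nat.dvd_add_right dvd_rfl).2 (ih d (by have := hα.1.1; omega) hd)

lemma IsRankOfAppearance.not_dvd {p : ℕ} (hp : p.Prime) {a b : ℤ} {α : ℕ}
    (hα : IsRankOfAppearance p a b α) (hα₂ : 2 < α) : ¬ (p : ℤ) ∣ b := by
  intro hb
  obtain ⟨n, rfl⟩ := Nat.exists_eq_add_of_lt hα₂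
  have hpow : (p : ℤ) ∣ a ^ (2 + n) :=
    (dvd_sub_right hα.1.2).1 (dvd_lucasSeq_succ_sub_pow hb (2 + n))
  have ha : (p : ℤ) ∣ lucasSeq a b 2 := by
    simpa [lucasSeq] using (Nat.prime_iff_prime_int.1 hp).dvd_of_dvd_pow hpow
  exact hα₂.not_ge (hα.2 ⟨two_pos, ha⟩)

lemma IsRankOfAppearance.pow_mul_dvd {p : ℕ} (hp : p.Prime) (hodd : Odd p) {a b : ℤ}
    (hb : ¬ (p : ℤ) ∣ b) {α : ℕ} (hα : IsRankOfAppearance p a b α)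
    (hsq : ¬ (p : ℤ) ^ 2 ∣ lucasSeq a b α) {k m : ℕ}
    (hm : (p : ℤ) ^ (k + 1) ∣ lucasSeq a b m) : p ^ k * α ∣ m := by
  obtain ⟨j, rfl⟩ := hα.dvd_of_dvd_lucasSeq hp hb ((dvd_pow_self _ k.succ_ne_zero).trans hm)
  have hone : emultiplicity (p : ℤ) (lucasSeq a b α) = (1 : ℕ) :=
    emultiplicity_eq_coe.2 ⟨by simpa using hα.1.2, hsq⟩
  rw [pow_dvd_iff_le_emultiplicity, emultiplicity_lucasSeq_mul hp hodd hb hα.1.2, hone, add_comm k,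
    Nat.cast_add, ENat.add_le_add_iff_left (ENat.natCast_ne_top 1),
    ← pow_dvd_iff_le_emultiplicity] at hm
  rw [mul_comm]
  exact mul_dvd_mul_left α hm

lemma card_Ioc_filter_not_dvd (M n : ℕ) :
    (Finset.Ioc 0 (M * (n + 1)) |>.filter fun i => ¬ n + 1 ∣ i).card = M * n := by
  have h := Finset.card_filter_add_card_filter_not (s := Finset.Ioc 0 (M * (n + 1))) (n + 1 ∣ ·)
  rw [Nat.Ioc_filter_dvd_card_eq_div, Nat.mul_div_cancel _ n.succ_pos, Nat.card_Ioc] at h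
  lia

/-- The residue class modulo `N` of `L_{n+1} / L_n`; it is meaningful when `L_n` is coprime to `N`,
since otherwise the inverse in `ZMod N` is a junk value. -/
def lucasRatio (N : ℕ) (a b : ℤ) (n : ℕ) : ZMod N :=
  lucasSeq a b (n + 1) * (lucasSeq a b n : ZMod N)⁻¹

lemma lucasRatio_mul_cancel {N : ℕ} {a b : ℤ} {n : ℕ} (hn : IsCoprime (N : ℤ) (lucasSeq a b n)) :
    lucasRatio N a b n * lucasSeq a b n = lucasSeq a b (n + 1) := by
  rw [lucasRatio, mul_assoc,
    ZMod.inv_mul_of_unit _ ((ZMod.coe_int_isUnit_iff_isCoprime _ _).2 hn), mul_one]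

lemma dvd_lucasSeq_sub_of_lucasRatio_eq {N : ℕ} {a b : ℤ} (hb : IsCoprime (N : ℤ) b) {s t : ℕ}
    (hs : IsCoprime (N : ℤ) (lucasSeq a b s)) (ht : IsCoprime (N : ℤ) (lucasSeq a b t))
    (hst : s ≤ t) (h : lucasRatio N a b s = lucasRatio N a b t) :
    (N : ℤ) ∣ lucasSeq a b (t - s) := by
  obtain ⟨d, rfl⟩ := Nat.exists_eq_add_of_le hst
  have hcross : (N : ℤ) ∣ lucasSeq a b (s + 1) * lucasSeq a b (s + d) -
      lucasSeq a b (s + d + 1) * lucasSeq a b s := by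
    rw [← ZMod.intCast_zmod_eq_zero_iff_dvd]
    push_cast
    rw [← lucasRatio_mul_cancel hs, ← lucasRatio_mul_cancel ht, h]
    ring
  rw [lucasSeq_dOcagne] at hcross
  rw [Nat.add_sub_cancel_left]
  exact hb.neg_right.pow_right.dvd_of_dvd_mul_left hcross

lemma lucasRatio_injOn {N M : ℕ} {a b : ℤ} (hb : IsCoprime (N : ℤ) b)
    (hM : ∀ m, (N : ℤ) ∣ lucasSeq a b m → M ∣ m) {S : Set ℕ} (hS : S ⊆ Set.Ioc 0 M)
    (hcop : ∀ n ∈ S, IsCoprime (N : ℤ) (lucasSeq a b n)) : Set.InjOn (lucasRatio N a b) S := by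
  intro s hs t ht h
  wlog hst : s ≤ t generalizing s t
  · exact (this ht hs h.symm (le_of_not_ge hst)).symm
  have hdvd := hM _ (dvd_lucasSeq_sub_of_lucasRatio_eq hb (hcop s hs) (hcop t ht) hst h)
  have hlt : t - s < M := (Nat.sub_lt_self (hS hs).1 hst).trans_le (hS ht).2
  exact hst.antisymm (Nat.sub_eq_zero_iff_le.1 (Nat.eq_zero_of_dvd_of_lt hdvd hlt))

lemma exists_pow_dvd_lucasSeq_succ_sub_mul {p : ℕ} (hp : p.Prime) {a b : ℤ} (hb : ¬ (p : ℤ) ∣ b)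
    (hdvd : ∀ k m : ℕ, (p : ℤ) ^ (k + 1) ∣ lucasSeq a b m → p ^ k * (p + 1) ∣ m)
    (k : ℕ) (z : ℤ) :
    ∃ n : ℕ, ¬ (p : ℤ) ∣ lucasSeq a b n ∧
      (p : ℤ) ^ k ∣ lucasSeq a b (n + 1) - z * lucasSeq a b n := by
  have hpZ := Nat.prime_iff_prime_int.1 hp
  have hcop : ∀ {x : ℤ}, ¬ (p : ℤ) ∣ x → IsCoprime ((p ^ (k + 1) : ℕ) : ℤ) x := fun hx => by
    rw [Nat.cast_pow]
    exact (hpZ.coprime_iff_not_dvd.2 hx).pow_left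
  have : NeZero (p ^ (k + 1)) := ⟨pow_ne_zero _ hp.ne_zero⟩
  let S := {i ∈ Finset.Ioc 0 (p ^ k * (p + 1)) | ¬ p + 1 ∣ i}
  have hS : ∀ n ∈ S, ¬ (p : ℤ) ∣ lucasSeq a b n := fun n hn h =>
    (Finset.mem_filter.1 hn).2 (by simpa using hdvd 0 n (by simpa using h))
  have hinj : Set.InjOn (lucasRatio (p ^ (k + 1)) a b) S :=
    lucasRatio_injOn (hcop hb) (fun m hm => hdvd k m (by exact_mod_cast hm))
      (fun n hn => Finset.mem_Ioc.1 (Finset.mem_filter.1 hn).1) fun n hn => hcop (hS n hn)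
  have hcard : (Finset.univ : Finset (ZMod (p ^ (k + 1)))).card ≤ S.card := by
    rw [card_Ioc_filter_not_dvd, Finset.card_univ, ZMod.card, pow_succ]
  obtain ⟨n, hn, hz⟩ := Finset.surjOn_of_injOn_of_card_le _
    (fun _ _ => Finset.mem_coe.2 (Finset.mem_univ _)) hinj hcard
    (Finset.mem_coe.2 (Finset.mem_univ (z : ZMod (p ^ (k + 1)))))
  refine ⟨n, hS n hn, (pow_dvd_pow _ k.le_succ).trans ?_⟩
  rw [← Nat.cast_pow, ← ZMod.intCast_zmod_eq_zero_iff_dvd]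
  push_cast
  rw [← lucasRatio_mul_cancel (hcop (hS n hn)), hz, sub_self]

section Padic

variable {p : ℕ} [Fact p.Prime]

lemma padic_norm_intCast_eq_one_of_not_dvd {n : ℤ} (hn : ¬ (p : ℤ) ∣ n) : ‖(n : ℚ_[p])‖ = 1 :=
  Padic.norm_intCast_eq_one_iff.2
    ((Nat.prime_iff_prime_int.1 Fact.out).coprime_iff_not_dvd.2 hn).symm

lemma norm_div_sub_intCast_le {m n z : ℤ} (hn : ¬ (p : ℤ) ∣ n) {k : ℕ}
    (h : (p : ℤ) ^ k ∣ m - z * n) : ‖(m / n : ℚ_[p]) - z‖ ≤ (p : ℝ) ^ (-k : ℤ) := by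
  have hn₁ : ‖(n : ℚ_[p])‖ = 1 := padic_norm_intCast_eq_one_of_not_dvd hn
  have hn₀ : (n : ℚ_[p]) ≠ 0 := norm_ne_zero_iff.1 (hn₁ ▸ one_ne_zero)
  rw [div_sub' hn₀, norm_div, hn₁, div_one, mul_comm]
  exact_mod_cast (Padic.norm_int_le_pow_iff_dvd (m - z * n) k).2 (by exact_mod_cast h)

lemma mem_keplerSet_of_norm_le_one {u : ℕ → ℤ}
    (h : ∀ (k : ℕ) (z : ℤ), ∃ n, ¬ (p : ℤ) ∣ u n ∧ (p : ℤ) ^ k ∣ u (n + 1) - z * u n)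
    {x : ℚ_[p]} (hx : ‖x‖ ≤ 1) : x ∈ keplerSet p fun n => (u n : ℚ_[p]) := by
  refine Metric.mem_closure_iff.2 fun ε hε => ?_
  obtain ⟨x, rfl⟩ : ∃ y : ℤ_[p], (y : ℚ_[p]) = x := ⟨⟨x, hx⟩, rfl⟩
  obtain ⟨k, hk⟩ := PadicInt.exists_pow_neg_lt p hε
  obtain ⟨n, hn, hdvd⟩ := h k (x.appr k)
  have happr : ‖(x : ℚ_[p]) - (x.appr k : ℤ)‖ ≤ (p : ℝ) ^ (-k : ℤ) := by
    exact_mod_cast (PadicInt.norm_le_pow_iff_mem_span_pow _ k).2 (x.appr_spec k)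
  refine ⟨_, ⟨n, fun h₀ => hn (by simp [Int.cast_eq_zero.1 h₀]), rfl⟩, ?_⟩
  refine (dist_triangle_max _ ((x.appr k : ℤ) : ℚ_[p]) _).trans_lt ((max_le ?_ ?_).trans_lt hk)
  · rwa [dist_eq_norm]
  · rw [dist_comm, dist_eq_norm]
    exact norm_div_sub_intCast_le hn hdvd

lemma div_sub_mem_keplerSet_lucasSeq {a b : ℤ} {y : ℚ_[p]}
    (hy : y ∈ keplerSet p fun n => (lucasSeq a b n : ℚ_[p])) (hya : y ≠ a) :
    b / (y - a) ∈ keplerSet p fun n => (lucasSeq a b n : ℚ_[p]) := by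
  have hcont : ContinuousAt (fun x : ℚ_[p] => b / (x - a)) y :=
    ContinuousAt.div (f := fun _ => (b : ℚ_[p])) (g := fun x => x - (a : ℚ_[p])) (by fun_prop)
      (by fun_prop) (sub_ne_zero.2 hya)
  have hy' := isOpen_ne.inter_closure ⟨hya, hy⟩
  refine closure_mono ?_ (mem_closure_image (f := fun x : ℚ_[p] => b / (x - a)) hcont hy')
  rintro _ ⟨_, ⟨hne, n, hn, rfl⟩, rfl⟩
  obtain _ | n := n
  · simp [lucasSeq] at hn
  have hratio := lucasSeq_div_sub_eq_mul_div hn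
  have hmul_ne : (b * lucasSeq a b n : ℚ_[p]) ≠ 0 :=
    (div_ne_zero_iff.1 (hratio ▸ sub_ne_zero.2 hne)).1
  have hb : (b : ℚ_[p]) ≠ 0 := left_ne_zero_of_mul hmul_ne
  have hn' : (lucasSeq a b n : ℚ_[p]) ≠ 0 := right_ne_zero_of_mul hmul_ne
  refine ⟨n, hn', ?_⟩
  simp only [hratio]
  field_simp

lemma keplerSet_lucasSeq_eq_univ {a b : ℤ} (hb : b ≠ 0)
    (h : ∀ x : ℚ_[p], ‖x‖ ≤ 1 → x ∈ keplerSet p fun n => (lucasSeq a b n : ℚ_[p])) :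
    (keplerSet p fun n => (lucasSeq a b n : ℚ_[p])) = Set.univ := by
  refine Set.eq_univ_of_forall fun x => ?_
  obtain hx | hx := le_or_gt ‖x‖ 1
  · exact h x hx
  have hb₀ : (b : ℚ_[p]) ≠ 0 := Int.cast_ne_zero.2 hb
  have hbx : (b : ℚ_[p]) / x ≠ 0 := div_ne_zero hb₀ (norm_pos_iff.1 (zero_lt_one.trans hx))
  have hbx_norm : ‖(b : ℚ_[p]) / x‖ ≤ 1 := by
    rw [norm_div]
    exact div_le_one_of_le₀ ((Padic.norm_int_le_one b).trans hx.le) (norm_nonneg x)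
  have hy : ‖(a + b / x : ℚ_[p])‖ ≤ 1 :=
    (Padic.nonarchimedean _ _).trans (max_le (Padic.norm_int_le_one a) hbx_norm)
  simpa [div_div_cancel₀ hb₀] using
    div_sub_mem_keplerSet_lucasSeq (h _ hy) (by simpa using hbx)

end Padic

section Ultrametric

variable {K : Type*} [NormedField K] [IsUltrametricDist K] {a b : ℤ} {x y : K}

lemma norm_le_one_of_add_mul_eq_intCast (hsum : x + y = a) (hprod : x * y = -b) :
    ‖x‖ ≤ 1 := by
  by_contra! hx
  have hsq : x * x = a * x + b := by linear_combination x * hsum - hprod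
  have hle : ‖x‖ * ‖x‖ ≤ max ‖x‖ 1 := by
    rw [← norm_mul, hsq]
    refine (IsUltrametricDist.norm_add_le_max _ _).trans (max_le_max ?_ ?_)
    · rw [norm_mul]
      exact mul_le_of_le_one_left (norm_nonneg x) (IsUltrametricDist.norm_intCast_le_one K a)
    · exact IsUltrametricDist.norm_intCast_le_one K b
  rw [max_eq_left hx.le] at hle
  nlinarith

lemma norm_eq_one_of_add_mul_eq_intCast (hsum : x + y = a) (hprod : x * y = -b)
    (hb : ‖(b : K)‖ = 1) : ‖x‖ = 1 := by
  have hx := norm_le_one_of_add_mul_eq_intCast hsum hprod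
  have hy := norm_le_one_of_add_mul_eq_intCast (add_comm x y ▸ hsum) (mul_comm x y ▸ hprod)
  have hxy : ‖x‖ * ‖y‖ = 1 := by rw [← norm_mul, hprod, norm_neg, hb]
  nlinarith [norm_nonneg x]

lemma norm_div_pow_sub_one_le_norm_lucasSeq (hsum : x + y = a) (hprod : x * y = -b)
    (hb : ‖(b : K)‖ = 1) (n : ℕ) : ‖(y / x) ^ n - 1‖ ≤ ‖(lucasSeq a b n : K)‖ := by
  have hx : ‖x‖ = 1 := norm_eq_one_of_add_mul_eq_intCast hsum hprod hb
  have hy : ‖y‖ = 1 :=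
    norm_eq_one_of_add_mul_eq_intCast (add_comm x y ▸ hsum) (mul_comm x y ▸ hprod) hb
  have hx₀ : x ≠ 0 := norm_ne_zero_iff.1 (hx ▸ one_ne_zero)
  have hsub : ‖x - y‖ ≤ 1 := by
    rw [sub_eq_add_neg]
    exact (IsUltrametricDist.norm_add_le_max x (-y)).trans_eq (by rw [norm_neg, hx, hy, max_self])
  calc ‖(y / x) ^ n - 1‖ = ‖x ^ n - y ^ n‖ := by
        rw [div_pow, div_sub_one (pow_ne_zero n hx₀), norm_div, norm_pow, hx, one_pow, div_one,
          norm_sub_rev]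
    _ = ‖(lucasSeq a b n : K)‖ * ‖x - y‖ := by
        rw [← lucasSeq_mul_sub_roots hsum hprod, norm_mul]
    _ ≤ ‖(lucasSeq a b n : K)‖ := mul_le_of_le_one_right (norm_nonneg _) hsub

end Ultrametric

lemma not_sq_dvd_lucasSeq_of_norm_eq_inv {p : ℕ} [Fact p.Prime] {a b : ℤ} (hb : ¬ (p : ℤ) ∣ b)
    {K : Type*} [NormedField K] [Algebra ℚ_[p] K]
    (hiso : ∀ x : ℚ_[p], ‖algebraMap ℚ_[p] K x‖ = ‖x‖) {δ : K}
    (hδ : δ ^ 2 = algebraMap ℚ_[p] K ((a ^ 2 + 4 * b : ℤ) : ℚ_[p])) {n : ℕ}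
    (hn : ‖((a - δ) / 2 / ((a + δ) / 2)) ^ n - 1‖ = (p : ℝ)⁻¹) :
    ¬ (p : ℤ) ^ 2 ∣ lucasSeq a b n := by
  have hint : ∀ z : ℤ, ‖(z : K)‖ = ‖(z : ℚ_[p])‖ := fun z => by rw [← hiso, map_intCast]
  have : IsUltrametricDist K :=
    IsUltrametricDist.isUltrametricDist_of_forall_norm_natCast_le_one fun m => by
      rw [← Int.cast_natCast, hint]
      exact Padic.norm_int_le_one _
  have : CharZero K := charZero_of_injective_algebraMap (algebraMap ℚ_[p] K).injective
  have hsum : (a + δ) / 2 + (a - δ) / 2 = a := by ring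
  have hprod : (a + δ) / 2 * ((a - δ) / 2) = -b := by
    rw [map_intCast] at hδ
    push_cast at hδ
    linear_combination -hδ / 4
  have hbK : ‖(b : K)‖ = 1 := (hint b).trans (padic_norm_intCast_eq_one_of_not_dvd hb)
  have hle := norm_div_pow_sub_one_le_norm_lucasSeq hsum hprod hbK n
  rw [hn, hint] at hle
  intro hdvd
  have hnorm_le := (Padic.norm_int_le_pow_iff_dvd (p := p) (lucasSeq a b n) 2).2
    (by exact_mod_cast hdvd)
  have hp₁ : (1 : ℝ) < p := by exact_mod_cast (Fact.out : p.Prime).one_lt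
  have hlt : (p : ℝ) ^ (-(2 : ℕ) : ℤ) < (p : ℝ)⁻¹ := by
    rw [← zpow_neg_one]
    exact zpow_lt_zpow_right₀ hp₁ (by norm_num)
  exact absurd (hle.trans hnorm_le) hlt.not_ge

theorem stmt_9_general {p : ℕ} [Fact p.Prime] (hp : p ≠ 2) {a b : ℤ}
    (hrank : IsRankOfAppearance p a b (p + 1)) (hsq : ¬ (p : ℤ) ^ 2 ∣ lucasSeq a b (p + 1)) :
    (keplerSet p fun n => (lucasSeq a b n : ℚ_[p])) = Set.univ := by
  have hpp : p.Prime := Fact.out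
  have hpb : ¬ (p : ℤ) ∣ b := hrank.not_dvd hpp (by have := hpp.two_le; lia)
  have hdvd : ∀ k m, (p : ℤ) ^ (k + 1) ∣ lucasSeq a b m → p ^ k * (p + 1) ∣ m := fun _ _ =>
    hrank.pow_mul_dvd hpp (hpp.odd_of_ne_two hp) hpb hsq
  exact keplerSet_lucasSeq_eq_univ (fun hb => hpb (hb ▸ dvd_zero _)) fun _ =>
    mem_keplerSet_of_norm_le_one (exists_pow_dvd_lucasSeq_succ_sub_mul hpp hpb hdvd)

theorem stmt_9 (p : ℕ) [Fact p.Prime] (hp : 3 ≤ p)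
    (a b : ℤ) (ha : a ≠ 0) (hb : b ≠ 0)
    -- `K = ℚ_p(√D)` is the unramified quadratic extension of `ℚ_p`, `D = a² + 4b`:
    -- a nonarchimedean normed field extension of `ℚ_p` with norms integer powers
    -- of `p`, spanned by `1` and a square root `δ ∉ ℚ_p` of `D`
    (K : Type) [NormedField K] [Algebra ℚ_[p] K]
    (hiso : ∀ x : ℚ_[p], ‖algebraMap ℚ_[p] K x‖ = ‖x‖)
    (hna : ∀ x y : K, ‖x + y‖ ≤ max ‖x‖ ‖y‖)
    (hval : ∀ x : K, x ≠ 0 → ∃ m : ℤ, ‖x‖ = (p : ℝ) ^ (-m))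
    (δ : K) (hδ : δ ^ 2 = algebraMap ℚ_[p] K ((a ^ 2 + 4 * b : ℤ) : ℚ_[p]))
    (hδQ : δ ∉ Set.range (algebraMap ℚ_[p] K))
    (hspan : ∀ x : K, ∃ u v : ℚ_[p], x = algebraMap ℚ_[p] K u + algebraMap ℚ_[p] K v * δ)
    -- the characteristic roots `λ₁ = (a + √D)/2`, `λ₂ = (a - √D)/2`
    (lam₁ lam₂ : K)
    (hlam₁ : lam₁ = (algebraMap ℚ_[p] K (a : ℚ_[p]) + δ) / 2)
    (hlam₂ : lam₂ = (algebraMap ℚ_[p] K (a : ℚ_[p]) - δ) / 2)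
    -- `α` is the rank of appearance of `p` in `L(a,b)`, and `α = p + 1`
    (α : ℕ) (hα0 : 0 < α) (hαdvd : (p : ℤ) ∣ lucasSeq a b α)
    (hαmin : ∀ m : ℕ, 0 < m → (p : ℤ) ∣ lucasSeq a b m → α ≤ m)
    (hα : α = p + 1)
    -- `ν_p((λ₂/λ₁) ^ α - 1) = 1`
    (hν : ‖(lam₂ / lam₁) ^ α - 1‖ = (p : ℝ)⁻¹) :
    keplerSet p (fun n => (lucasSeq a b n : ℚ_[p])) = Set.univ := by
  subst hα hlam₁ hlam₂
  have hrank : IsRankOfAppearance p a b (p + 1) := ⟨⟨hα0, hαdvd⟩, fun m hm => hαmin m hm.1 hm.2⟩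
  have hpb : ¬ (p : ℤ) ∣ b := hrank.not_dvd Fact.out (by lia)
  rw [map_intCast] at hν
  exact stmt_9_general (by lia) hrank (not_sq_dvd_lucasSeq_of_norm_eq_inv hpb hiso hδ hν)
end
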